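/- The log transform of the graphical bridge counts is twice the plane tree counts: if B_n is the number of graphical bridges of length 2n (B_0 = 1) and T_n is the number of size-n submultisets of {0,...,n-1} summing to 0 mod n, then the formal power series identity sum_{n≥0} B_n x^n = exp( sum_{k≥1} (2·T_k / k)·x^k ) holds; equivalently n·B_n = sum_{i=1}^n 2·T_i·B_{n-i} for all n ≥ 1. -/

import Mathlib

open Finset Filter Topology

noncomputable section

/-- number of size-`k` submultisets of `{0,…,n-1}` whose sum is ≡ 0 mod `n` -/
def symCount (n k : ℕ) : ℕ :=
  Nat.card {s : Sym (Fin n) k // ((s : Multiset (Fin n)).map Fin.val).sum % n = 0}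

/-- `T n`: number of size-`n` submultisets of `{0,…,n-1}` summing to `0` mod `n`
(= number of rooted unlabelled cyclically distinct plane trees with `n` edges). -/
def planeTreeT (n : ℕ) : ℕ := symCount n n

/-- Walkup's formula expression `(1/n) ∑_{d ∣ n} C(2d-1, d) φ(n/d)` (exact division). -/
def walkupT (n : ℕ) : ℕ :=
  (∑ d ∈ n.divisors, Nat.choose (2 * d - 1) d * Nat.totient (n / d)) / n

/-- number of up-steps strictly before position `i` in a monotone lattice path
encoded by `f : Fin m → Bool` (`true` = up-step, `false` = right-step). -/
def upsBefore {m : ℕ} (f : Fin m → Bool) (i : Fin m) : ℕ :=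
  Nat.card {j : Fin m // j < i ∧ f j = true}

/-- area below/right of a monotone lattice path: sum over right-steps of the
number of up-steps before them. -/
def pathArea {m : ℕ} (f : Fin m → Bool) : ℕ :=
  ∑ i : Fin m, if f i = false then upsBefore f i else 0

/-- number of up-steps of a monotone lattice path. -/
def upCount {m : ℕ} (f : Fin m → Bool) : ℕ := Nat.card {i : Fin m // f i = true}

/-- the `m`-th increment (`±1`) of a walk of length `2n` encoded by
`ε : Fin (2n) → Bool` (`true` = `+1`); `0` out of range. -/
def stepVal (n : ℕ) (ε : Fin (2 * n) → Bool) (m : ℕ) : ℤ :=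
  if h : m < 2 * n then (if ε ⟨m, h⟩ then 1 else -1) else 0

/-- position of the walk after `k` steps. -/
def wpos (n : ℕ) (ε : Fin (2 * n) → Bool) (k : ℕ) : ℤ :=
  ∑ i ∈ Finset.range k, stepVal n ε i

/-- a walk of length `2n` is a bridge if it returns to `0`. -/
def IsBridge (n : ℕ) (ε : Fin (2 * n) → Bool) : Prop := wpos n ε (2 * n) = 0

/-- partial diamond area `σ_{2k} = (1/2) ∑_{i=1}^k B_{2i}` (the division is exact). -/
def psig (n : ℕ) (ε : Fin (2 * n) → Bool) (k : ℕ) : ℤ :=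
  (∑ i ∈ Finset.range k, wpos n ε (2 * (i + 1))) / 2

/-- diamond area `σ(B) = (1/2) ∑_{i=1}^n B_{2i}`. -/
def dsigma (n : ℕ) (ε : Fin (2 * n) → Bool) : ℤ := psig n ε n

/-- a bridge is graphical if `σ(B) = 0` and `σ_{2k} ≥ 0` for all `1 ≤ k < n`. -/
def IsGraphical (n : ℕ) (ε : Fin (2 * n) → Bool) : Prop :=
  IsBridge n ε ∧ dsigma n ε = 0 ∧ ∀ k, 1 ≤ k → k < n → 0 ≤ psig n ε k

/-- `B_n`: the number of graphical bridges of length `2n`. -/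
def graphicalCount (n : ℕ) : ℕ := Nat.card {ε : Fin (2 * n) → Bool // IsGraphical n ε}

/-- The total increment of a word `w` whose letters have increments `v`. -/
def wordHeight {α : Type*} (v : α → ℤ) (w : List α) : ℤ := (w.map v).sum

/-- The area of a word: the sum of the heights reached after each of its letters. -/
def wordArea {α : Type*} (v : α → ℤ) : List α → ℤ
  | [] => 0
  | a :: w => wordArea v w + (w.length + 1) * v a

/-- The words of height and area zero all of whose prefixes have nonnegative area. -/
def IsGraphicalWord {α : Type*} (v : α → ℤ) (w : List α) : Prop :=
  wordHeight v w = 0 ∧ wordArea v w = 0 ∧ ∀ u, u <+: w → 0 ≤ wordArea v u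

/-- The words of height zero whose area is divisible by their length. -/
def IsCyclicWord {α : Type*} (v : α → ℤ) (w : List α) : Prop :=
  wordHeight v w = 0 ∧ (w.length : ℤ) ∣ wordArea v w

/-- No nonempty initial factor has both height and area zero. -/
def IsPrimitiveWord {α : Type*} (v : α → ℤ) (w : List α) : Prop :=
  ∀ a b, w = a ++ b → wordHeight v a = 0 → wordArea v a = 0 → a = []

lemma prefix_or_of_prefix_append {α : Type*} {p u w : List α} (h : p <+: u ++ w) :
    p <+: u ∨ ∃ q, p = u ++ q ∧ q <+: w := by
  obtain ⟨t, ht⟩ := h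
  rcases List.append_eq_append_iff.mp ht with ⟨z, rfl, -⟩ | ⟨z, rfl, rfl⟩
  · exact .inl (List.prefix_append p z)
  · exact .inr ⟨z, rfl, List.prefix_append z t⟩

section Words

variable {α : Type*} {v : α → ℤ}

@[simp] lemma wordHeight_nil : wordHeight v [] = 0 := rfl

@[simp] lemma wordArea_nil : wordArea v [] = 0 := rfl

@[simp] lemma wordHeight_singleton (a : α) : wordHeight v [a] = v a := by simp [wordHeight]

@[simp] lemma wordArea_singleton (a : α) : wordArea v [a] = v a := by simp [wordArea]

@[simp] lemma wordHeight_append (u w : List α) :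
    wordHeight v (u ++ w) = wordHeight v u + wordHeight v w := by
  simp [wordHeight]

@[simp] lemma wordArea_append (u w : List α) :
    wordArea v (u ++ w) = wordArea v u + wordArea v w + w.length * wordHeight v u := by
  induction u with
  | nil => simp
  | cons a u ih =>
    simp only [List.cons_append, wordArea, ih, wordHeight, List.map_cons, List.sum_cons,
      List.length_append]
    push_cast
    ring

lemma IsGraphicalWord.nil : IsGraphicalWord v [] :=
  ⟨rfl, rfl, fun u hu ↦ by rw [List.prefix_nil.mp hu]; simp⟩

lemma IsGraphicalWord.append {u w : List α} (hu : IsGraphicalWord v u)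
    (hw : IsGraphicalWord v w) : IsGraphicalWord v (u ++ w) := by
  refine ⟨by simp [hu.1, hw.1], by simp [hu.1, hu.2.1, hw.2.1], fun p hp ↦ ?_⟩
  rcases prefix_or_of_prefix_append hp with h | ⟨q, rfl, hq⟩
  · exact hu.2.2 p h
  · simpa [hu.1, hu.2.1] using hw.2.2 q hq

lemma IsGraphicalWord.of_append {u w : List α} (h : IsGraphicalWord v (u ++ w))
    (h0 : wordHeight v u = 0) (h1 : wordArea v u = 0) :
    IsGraphicalWord v u ∧ IsGraphicalWord v w := by
  obtain ⟨a, b, c⟩ := h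
  refine ⟨⟨h0, h1, fun p hp ↦ c p (hp.trans (List.prefix_append u w))⟩,
    by simpa [h0] using a, by simpa [h0, h1] using b, fun p hp ↦ ?_⟩
  simpa [h0, h1] using c (u ++ p) ((List.prefix_append_right_inj u).mpr hp)

lemma IsGraphicalWord.isCyclicWord_rotate {u w : List α} (h : IsGraphicalWord v (u ++ w)) :
    IsCyclicWord v (w ++ u) := by
  obtain ⟨a, b, -⟩ := h
  simp only [wordHeight_append, wordArea_append] at a b
  refine ⟨by simp only [wordHeight_append]; linarith, wordHeight v w, ?_⟩
  have : wordHeight v u = - wordHeight v w := by linarith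
  rw [this] at b
  simp only [wordArea_append, List.length_append]
  push_cast
  linear_combination b

/-- A swap of two factors that preserves being graphical happens at a zero of the area. -/
lemma IsGraphicalWord.eq_zero_of_swap {u w : List α} (h : IsGraphicalWord v (u ++ w))
    (h' : IsGraphicalWord v (w ++ u)) : wordHeight v u = 0 ∧ wordArea v u = 0 := by
  have hu := h.2.2 u (List.prefix_append u w)
  have hw := h'.2.2 w (List.prefix_append w u)
  obtain ⟨a, b, -⟩ := h
  obtain ⟨-, b', -⟩ := h'
  simp only [wordHeight_append, wordArea_append] at a b b'
  have hy : wordHeight v w = - wordHeight v u := by linarith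
  rw [hy] at b'
  have hz : ((u.length : ℤ) + w.length) * wordHeight v u = 0 := by linear_combination b - b'
  rcases mul_eq_zero.mp hz with h0 | h0
  · have : u = [] := List.length_eq_zero_iff.mp (by omega)
    simp [this]
  · rw [h0] at b
    exact ⟨h0, by linarith⟩

lemma exists_split_isPrimitiveWord (c p u : List α) (hp : IsGraphicalWord v p)
    (hu : IsGraphicalWord v (u ++ c)) :
    ∃ p' u', p' ++ u' = p ++ u ∧ IsGraphicalWord v p' ∧ IsGraphicalWord v (u' ++ c) ∧
      IsPrimitiveWord v u' := by
  by_cases h : IsPrimitiveWord v u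
  · exact ⟨p, u, rfl, hp, hu, h⟩
  · simp only [IsPrimitiveWord, not_forall] at h
    obtain ⟨a, b, rfl, h0, h1, hne⟩ := h
    rw [List.append_assoc] at hu
    obtain ⟨ha, hb⟩ := hu.of_append h0 h1
    have : b.length < (a ++ b).length := by
      simpa using List.length_pos_iff.mpr hne
    obtain ⟨p', u', e, h'⟩ := exists_split_isPrimitiveWord c (p ++ a) b (hp.append ha) hb
    exact ⟨p', u', by rw [e, List.append_assoc], h'⟩
termination_by u.length

lemma exists_rotate_isPrimitiveWord (u w : List α) (hw : w ≠ [])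
    (hu : IsGraphicalWord v (u ++ w)) :
    ∃ u' w', w' ++ u' = w ++ u ∧ w' ≠ [] ∧ IsGraphicalWord v (u' ++ w') ∧
      IsPrimitiveWord v u' := by
  by_cases h : IsPrimitiveWord v u
  · exact ⟨u, w, rfl, hw, hu, h⟩
  · simp only [IsPrimitiveWord, not_forall] at h
    obtain ⟨a, b, rfl, h0, h1, hne⟩ := h
    rw [List.append_assoc] at hu
    obtain ⟨ha, hb⟩ := hu.of_append h0 h1
    have : b.length < (a ++ b).length := by
      simpa using List.length_pos_iff.mpr hne
    obtain ⟨u', w', e, h'⟩ := exists_rotate_isPrimitiveWord b (w ++ a) (by simp [hne])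
      (by rw [← List.append_assoc]; exact hb.append ha)
    exact ⟨u', w', by rw [e, List.append_assoc], h'⟩
termination_by u.length

/-- Discrete intermediate value property at a minimum of the tilted area. -/
lemma exists_minimum_of_area {n : ℕ} (hn : 1 ≤ n) {y a : ℕ → ℤ} {h : ℤ} (y0 : y 0 = 0)
    (yn : y n = 0) (a0 : a 0 = 0) (an : a n = n * h) (hy : ∀ k < n, y (k + 1) ≤ y k + 1)
    (ha : ∀ k < n, a (k + 1) = a k + y (k + 1)) :
    ∃ m, 1 ≤ m ∧ m ≤ n ∧ y m = h ∧ ∀ k ≤ n, a m - m * h ≤ a k - k * h := by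
  obtain ⟨m, hm, hmin⟩ := Finset.exists_min_image (Finset.Icc 1 n) (fun k ↦ a k - k * h)
    ⟨1, by simp [hn]⟩
  have hmin' : ∀ k ≤ n, a m - m * h ≤ a k - k * h := by
    intro k hk
    rcases Nat.eq_zero_or_pos k with rfl | hk0
    · have := hmin n (by simp [hn])
      simp only [an] at this
      simpa [a0] using this
    · exact hmin k (by simp; omega)
  rw [Finset.mem_Icc] at hm
  obtain ⟨l, rfl⟩ : ∃ l, m = l + 1 := ⟨m - 1, by omega⟩
  have h1 := hmin' l (by omega)
  have h2 := ha l (by omega)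
  push_cast at h1
  have hle : y (l + 1) ≤ h := by linarith
  rcases hle.eq_or_lt with heq | hlt
  · exact ⟨l + 1, by omega, by omega, heq, hmin'⟩
  rcases hm.2.lt_or_eq with hln | rfl
  · have h3 := hmin' (l + 1 + 1) (by omega)
    have h4 := ha (l + 1) hln
    have h5 := hy (l + 1) hln
    push_cast at h3
    have heq : y (l + 1 + 1) = h := le_antisymm (by omega) (by linarith)
    refine ⟨l + 1 + 1, by omega, by omega, heq, fun k hk ↦ ?_⟩
    have := hmin' k hk
    push_cast at this ⊢
    linarith
  · have h3 := hmin' 1 (by omega)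
    have h4 := ha 0 (by omega)
    have h5 := hy 0 (by omega)
    rw [an] at h3 hmin'
    simp only [zero_add] at h4 h5
    push_cast at h3
    have heq : y 1 = h := le_antisymm (by omega) (by linarith)
    refine ⟨1, by omega, by omega, heq, fun k hk ↦ ?_⟩
    have := hmin' k hk
    push_cast at this ⊢
    linarith

lemma IsCyclicWord.exists_isGraphicalWord (hv : ∀ a, v a ≤ 1) {w : List α}
    (hw : IsCyclicWord v w) (hne : w ≠ []) :
    ∃ a b, w = a ++ b ∧ a ≠ [] ∧ IsGraphicalWord v (b ++ a) := by
  obtain ⟨hy, h, hh⟩ := hw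
  have hsucc : ∀ k, ∀ hk : k < w.length, w.take (k + 1) = w.take k ++ [w[k]] := fun k hk ↦
    List.take_succ_eq_append_getElem hk
  obtain ⟨m, hm1, hmn, hym, hmin⟩ := exists_minimum_of_area
    (List.length_pos_iff.mpr hne) (y := fun k ↦ wordHeight v (w.take k))
    (a := fun k ↦ wordArea v (w.take k)) (h := h) (by simp) (by simpa using hy) (by simp)
    (by simpa using hh)
    (fun k hk ↦ by simp only [hsucc k hk, wordHeight_append, wordHeight_singleton]
                   linarith [hv w[k]])
    (fun k hk ↦ by simp only [hsucc k hk, wordHeight_append, wordHeight_singleton,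
                     wordArea_append, wordArea_singleton, List.length_singleton]
                   push_cast; ring)
  have hmin' : ∀ u, u <+: w → wordArea v (w.take m) - m * h ≤ wordArea v u - u.length * h := by
    intro u hu
    have := hmin u.length hu.length_le
    rwa [← List.prefix_iff_eq_take.mp hu] at this
  obtain ⟨a, b, rfl, rfl⟩ : ∃ a b, w = a ++ b ∧ a.length = m :=
    ⟨w.take m, w.drop m, by simp, by simpa using hmn⟩
  simp only [List.take_left] at hym hmin'
  clear hmin hsucc
  simp only [wordHeight_append, wordArea_append, List.length_append] at hy hh
  push_cast at hh
  have hyb : wordHeight v b = -h := by linarith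
  rw [hym] at hh
  refine ⟨a, b, rfl, List.length_pos_iff.mp hm1, by simp [hym, hyb],
    by rw [wordArea_append, hyb]; linear_combination hh, fun p hp ↦ ?_⟩
  rcases prefix_or_of_prefix_append hp with h' | ⟨q, rfl, hq⟩
  · have := hmin' (a ++ p) ((List.prefix_append_right_inj a).mpr h')
    simp only [wordArea_append, List.length_append, hym] at this
    push_cast at this
    linarith
  · have := hmin' q (hq.trans (List.prefix_append a b))
    simp only [wordArea_append, hyb]
    linarith

end Words

/-- The number of graphical words of length `n`. -/
def graphicalWordCount {α : Type*} (v : α → ℤ) (n : ℕ) : ℕ :=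
  Nat.card {w : List α // w.length = n ∧ IsGraphicalWord v w}

/-- The number of cyclic words of length `n`. -/
def cyclicWordCount {α : Type*} (v : α → ℤ) (n : ℕ) : ℕ :=
  Nat.card {w : List α // w.length = n ∧ IsCyclicWord v w}

/-- Triples `(p, u, w)` with `p` and `u ++ w` graphical such that the marked position, between
`u` and `w`, lies in the first irreducible factor of `u ++ w`. -/
def markedWords {α : Type*} (v : α → ℤ) (n : ℕ) : Set (List α × List α × List α) :=
  {x | IsGraphicalWord v x.1 ∧ IsGraphicalWord v (x.2.1 ++ x.2.2) ∧ IsPrimitiveWord v x.2.1 ∧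
    x.2.2 ≠ [] ∧ x.1.length + (x.2.1.length + x.2.2.length) = n}

section Counting

variable {α : Type*} {v : α → ℤ}

lemma card_markedWords_eq_mul (n : ℕ) :
    Nat.card (markedWords v n) = n * graphicalWordCount v n := by
  let f : markedWords v n →
      {w : List α // w.length = n ∧ IsGraphicalWord v w} × Fin n := fun x ↦
    (⟨x.1.1 ++ (x.1.2.1 ++ x.1.2.2), by simp [x.2.2.2.2.2], x.2.1.append x.2.2.1⟩,
      ⟨x.1.1.length + x.1.2.1.length, by
        have := x.2.2.2.2.2
        have := List.length_pos_iff.mpr x.2.2.2.2.1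
        omega⟩)
  have hf : Function.Bijective f := by
    constructor
    · rintro ⟨⟨p, u, w⟩, hp, huw, hu, hw, hl⟩ ⟨⟨p', u', w'⟩, hp', huw', hu', hw', hl'⟩ h
      simp only [f, Prod.mk.injEq, Subtype.mk.injEq, Fin.mk.injEq] at h hp huw hu hp' huw' hu'
      obtain ⟨h, hlen⟩ := h
      rw [← List.append_assoc, ← List.append_assoc] at h
      obtain ⟨hpu, rfl⟩ := List.append_inj h (by simpa using hlen)
      have : p = p' ∧ u = u' := by
        rcases List.append_eq_append_iff.mp hpu with ⟨z, rfl, rfl⟩ | ⟨z, rfl, rfl⟩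
        · have hy := hp'.1
          have ha := hp'.2.1
          have := hu z u' rfl (by simpa [hp.1] using hy) (by simpa [hp.1, hp.2.1] using ha)
          simp [this]
        · have hy := hp.1
          have ha := hp.2.1
          have := hu' z u rfl (by simpa [hp'.1] using hy) (by simpa [hp'.1, hp'.2.1] using ha)
          simp [this]
      simp [this]
    · rintro ⟨⟨g, hg, hgr⟩, t, ht⟩
      obtain ⟨p, u, h1, h2, h3, h4⟩ := exists_split_isPrimitiveWord (v := v) (g.drop t) []
        (g.take t) .nil (by simpa using hgr)
      rw [List.nil_append] at h1
      have hl := congrArg List.length h1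
      simp only [List.length_append, List.length_take] at hl
      refine ⟨⟨(p, u, g.drop t), h2, h3, h4, ?_, ?_⟩, ?_⟩
      · simp only [ne_eq, List.drop_eq_nil_iff, not_le]
        omega
      · simp only [List.length_drop]
        omega
      · simp only [f, Prod.mk.injEq, Subtype.mk.injEq, Fin.mk.injEq]
        refine ⟨by rw [← List.append_assoc, h1, List.take_append_drop], by omega⟩
  rw [Nat.card_congr (Equiv.ofBijective f hf), Nat.card_prod, Nat.card_fin, mul_comm]
  rfl

lemma card_markedWords_eq_card_pairs (hv : ∀ a, v a ≤ 1) (n : ℕ) :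
    Nat.card (markedWords v n) = Nat.card {x : List α × List α //
      x.2 ≠ [] ∧ x.1.length + x.2.length = n ∧ IsGraphicalWord v x.1 ∧ IsCyclicWord v x.2} := by
  let f : markedWords v n → {x : List α × List α //
      x.2 ≠ [] ∧ x.1.length + x.2.length = n ∧ IsGraphicalWord v x.1 ∧ IsCyclicWord v x.2} :=
    fun x ↦ ⟨(x.1.1, x.1.2.2 ++ x.1.2.1), by simp [x.2.2.2.2.1],
      by simpa [add_comm x.1.2.2.length] using x.2.2.2.2.2, x.2.1,
      x.2.2.1.isCyclicWord_rotate⟩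
  refine Nat.card_congr (Equiv.ofBijective f ⟨?_, ?_⟩)
  · rintro ⟨⟨p, u, w⟩, hp, huw, hu, hw, hl⟩ ⟨⟨p', u', w'⟩, hp', huw', hu', hw', hl'⟩ h
    simp only [f, Prod.mk.injEq, Subtype.mk.injEq] at h huw hu huw' hu'
    obtain ⟨rfl, h⟩ := h
    have : w = w' ∧ u = u' := by
      rcases List.append_eq_append_iff.mp h with ⟨z, rfl, rfl⟩ | ⟨z, rfl, rfl⟩
      · rw [List.append_assoc] at huw
        rw [← List.append_assoc] at huw'
        have h0 := huw.eq_zero_of_swap huw'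
        simp [hu z u' rfl h0.1 h0.2]
      · rw [← List.append_assoc] at huw
        rw [List.append_assoc] at huw'
        have h0 := huw'.eq_zero_of_swap huw
        simp [hu' z u rfl h0.1 h0.2]
    simp [this]
  · rintro ⟨⟨p, w⟩, hw, hl, hp, hc⟩
    obtain ⟨a, b, rfl, ha, hab⟩ := hc.exists_isGraphicalWord hv hw
    obtain ⟨u, w, e, hw', hg, hprim⟩ := exists_rotate_isPrimitiveWord b a ha hab
    refine ⟨⟨(p, u, w), hp, hg, hprim, hw', ?_⟩, by simp [f, e]⟩
    rw [← hl]
    have := congrArg List.length e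
    simp only [List.length_append] at this ⊢
    omega

/-- The cycle lemma for graphical words. -/
theorem mul_graphicalWordCount [Finite α] (hv : ∀ a, v a ≤ 1) (n : ℕ) :
    n * graphicalWordCount v n =
      ∑ i ∈ Finset.Icc 1 n, cyclicWordCount v i * graphicalWordCount v (n - i) := by
  rw [← card_markedWords_eq_mul, card_markedWords_eq_card_pairs hv]
  have hfin (k : ℕ) (q : List α → Prop) : Finite {w : List α // w.length = k ∧ q w} :=
    ((List.finite_length_eq α k).subset fun w hw ↦ hw.1).to_subtype
  let e : {x : List α × List α //
      x.2 ≠ [] ∧ x.1.length + x.2.length = n ∧ IsGraphicalWord v x.1 ∧ IsCyclicWord v x.2} ≃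
      Σ i : Finset.Icc 1 n, {w : List α // w.length = i ∧ IsCyclicWord v w} ×
        {w : List α // w.length = n - i ∧ IsGraphicalWord v w} :=
    { toFun x := ⟨⟨x.1.2.length, by
          have := List.length_pos_iff.mpr x.2.1
          have := x.2.2.1
          simp only [Finset.mem_Icc]
          omega⟩,
        ⟨x.1.2, rfl, x.2.2.2.2⟩, ⟨x.1.1, by have := x.2.2.1; simp only; omega, x.2.2.2.1⟩⟩
      invFun y := ⟨(y.2.2.1, y.2.1.1), by
        obtain ⟨⟨i, hi⟩, ⟨w, hw, hc⟩, ⟨p, hp, hg⟩⟩ := y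
        rw [Finset.mem_Icc] at hi
        simp only at hw hp
        refine ⟨List.length_pos_iff.mp (by simp only; omega), by simp only; omega, hg, hc⟩⟩
      left_inv x := rfl
      right_inv := by
        rintro ⟨⟨i, hi⟩, ⟨w, hw, hc⟩, ⟨p, hp, hg⟩⟩
        simp only at hw
        subst hw
        rfl }
  rw [Nat.card_congr e, Nat.card_sigma]
  simp only [Nat.card_prod]
  exact Finset.sum_coe_sort (Finset.Icc 1 n)
    (fun i ↦ cyclicWordCount v i * graphicalWordCount v (n - i))

end Counting

section MonotoneFunctions

lemma strictMono_val_add {m k : ℕ} {g : Fin k → Fin m} (hg : Monotone g) :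
    StrictMono fun i ↦ (g i : ℕ) + i := fun _ _ hij ↦
  Nat.add_lt_add_of_le_of_lt (hg hij.le) hij

lemma card_monotone_eq_card_sym (m k : ℕ) (P : ℕ → Prop) :
    Nat.card {g : Fin k → Fin m // Monotone g ∧ P (∑ i, (g i : ℕ))} =
      Nat.card {s : Sym (Fin m) k // P ((s : Multiset (Fin m)).map Fin.val).sum} := by
  let F : {g : Fin k → Fin m // Monotone g ∧ P (∑ i, (g i : ℕ))} →
      {s : Sym (Fin m) k // P ((s : Multiset (Fin m)).map Fin.val).sum} := fun g ↦
    ⟨Sym.mk (List.ofFn g.1 : Multiset (Fin m)) (by simp), by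
      simpa [List.map_ofFn, List.sum_ofFn] using g.2.2⟩
  refine Nat.card_congr (Equiv.ofBijective F ⟨?_, ?_⟩)
  · rintro ⟨g, hg, hP⟩ ⟨g', hg', hP'⟩ h
    have hperm : (List.ofFn g : Multiset (Fin m)) = List.ofFn g' :=
      congrArg (fun s ↦ (s.1 : Multiset (Fin m))) h
    have := (Multiset.coe_eq_coe.mp hperm).eq_of_sortedLE
      (List.sortedLE_ofFn_iff.mpr hg) (List.sortedLE_ofFn_iff.mpr hg')
    exact Subtype.ext (List.ofFn_injective this)
  · rintro ⟨⟨s, hs⟩, hP⟩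
    have hl : (s.sort (· ≤ ·)).length = k := by simpa using hs
    obtain ⟨g, hg⟩ : ∃ g : Fin k → Fin m, List.ofFn g = s.sort (· ≤ ·) := by
      subst hl
      exact ⟨_, List.ofFn_get _⟩
    have hs' : (List.ofFn g : Multiset (Fin m)) = s := by rw [hg, Multiset.sort_eq]
    refine ⟨⟨g, List.sortedLE_ofFn_iff.mp ?_, ?_⟩, ?_⟩
    · rw [hg]
      exact (s.pairwise_sort (· ≤ ·)).sortedLE
    · subst hs'
      simpa [List.map_ofFn, List.sum_ofFn] using hP
    · subst hs'
      rfl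

lemma card_monotone_eq_card_finset (m q : ℕ) (P : ℕ → Prop) :
    Nat.card {g : Fin (q + 1) → Fin m //
        Monotone g ∧ P (∑ i, (g i : ℕ) + ∑ i ∈ Finset.range (q + 1), i)} =
      Nat.card {A : Finset ℕ // A ⊆ Finset.range (m + q) ∧ A.card = q + 1 ∧ P (∑ x ∈ A, x)} := by
  let F : {g : Fin (q + 1) → Fin m //
        Monotone g ∧ P (∑ i, (g i : ℕ) + ∑ i ∈ Finset.range (q + 1), i)} →
      {A : Finset ℕ // A ⊆ Finset.range (m + q) ∧ A.card = q + 1 ∧ P (∑ x ∈ A, x)} := fun g ↦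
    ⟨Finset.univ.image fun i ↦ (g.1 i : ℕ) + i, by
      refine ⟨fun x hx ↦ ?_, ?_, ?_⟩
      · obtain ⟨i, -, rfl⟩ := Finset.mem_image.mp hx
        have := (g.1 i).isLt
        have := i.isLt
        simp only [Finset.mem_range]
        omega
      · rw [Finset.card_image_of_injective _ (strictMono_val_add g.2.1).injective]
        simp
      · rw [Finset.sum_image fun _ _ _ _ h ↦ (strictMono_val_add g.2.1).injective h,
          Finset.sum_add_distrib, Fin.sum_univ_eq_sum_range (fun i ↦ i)]
        exact g.2.2⟩
  refine Nat.card_congr (Equiv.ofBijective F ⟨?_, ?_⟩)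
  · rintro ⟨g, hg, hP⟩ ⟨g', hg', hP'⟩ h
    have himage := congrArg (fun A ↦ ((A.1 : Finset ℕ) : Set ℕ)) h
    simp only [F, Finset.coe_image, Finset.coe_univ, Set.image_univ] at himage
    rw [(strictMono_val_add hg).range_inj (strictMono_val_add hg')] at himage
    refine Subtype.ext (funext fun i ↦ Fin.ext ?_)
    simpa using congrFun himage i
  · rintro ⟨A, hA, hcard, hP⟩
    set G := A.orderEmbOfFin hcard
    have hmono : Monotone fun i ↦ (G i : ℤ) - i := by
      rw [Fin.monotone_iff_le_succ]
      intro i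
      have : G i.castSucc < G i.succ := G.strictMono i.castSucc_lt_succ
      simp only [Fin.val_castSucc, Fin.val_succ]
      push_cast
      omega
    have hlow : ∀ i : Fin (q + 1), (i : ℕ) ≤ G i := fun i ↦ by
      have := hmono (Fin.zero_le i)
      simp only [Fin.val_zero] at this
      omega
    have hhigh : ∀ i : Fin (q + 1), G i - i < m := fun i ↦ by
      have h1 := hmono (Fin.le_last i)
      have h2 := Finset.mem_range.mp (hA (A.orderEmbOfFin_mem hcard (Fin.last q)))
      have h3 := hlow i
      simp only [Fin.val_last] at h1
      change G (Fin.last q) < _ at h2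
      omega
    have himage : (Finset.univ.image fun i ↦ G i - (i : ℕ) + i) = A := by
      have : (fun i : Fin (q + 1) ↦ G i - (i : ℕ) + i) = G :=
        funext fun i ↦ Nat.sub_add_cancel (hlow i)
      rw [this]
      exact A.image_orderEmbOfFin_univ hcard
    refine ⟨⟨fun i ↦ ⟨G i - i, hhigh i⟩, fun i j hij ↦ ?_, ?_⟩, Subtype.ext himage⟩
    · have h1 := hmono hij
      have h2 := hlow i
      simp only [Fin.mk_le_mk] at h1 ⊢
      omega
    · rw [← Fin.sum_univ_eq_sum_range (fun i ↦ i), ← Finset.sum_add_distrib]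
      rw [← himage, Finset.sum_image] at hP
      · exact hP
      · intro i _ j _ h
        have h : G i - (i : ℕ) + i = G j - (j : ℕ) + j := h
        rw [Nat.sub_add_cancel (hlow i), Nat.sub_add_cancel (hlow j)] at h
        exact G.injective h

end MonotoneFunctions

section Selections

lemma card_eq_two_mul_of_involutive {α : Type*} [Finite α] {τ : α → α}
    (hτ : Function.Involutive τ) (p : α → Prop) (hp : ∀ a, p a ↔ ¬ p (τ a)) :
    Nat.card α = 2 * Nat.card {a // p a} := by
  classical
  rw [← Nat.card_congr (Equiv.sumCompl p), Nat.card_sum, two_mul]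
  congr 1
  exact (Nat.card_congr ((hτ.toPerm τ).subtypeEquiv hp)).symm

/-- The `n`-element subsets of `{0, …, 2n-1}` with the same sum as `{0, …, n-1}` modulo `n`. -/
def IsSelection (n : ℕ) (A : Finset ℕ) : Prop :=
  A ⊆ Finset.range (n + n) ∧ A.card = n ∧
    (n : ℤ) ∣ ((∑ x ∈ A, x : ℕ) : ℤ) - (∑ i ∈ Finset.range n, i : ℕ)

lemma IsSelection.sdiff {n : ℕ} {A : Finset ℕ} (h : IsSelection n A) :
    IsSelection n (Finset.range (n + n) \ A) := by
  obtain ⟨h1, h2, h3⟩ := h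
  refine ⟨Finset.sdiff_subset, by simp [Finset.card_sdiff_of_subset h1, h2], ?_⟩
  have h4 := Finset.sum_sdiff (f := fun x ↦ x) h1
  have h5 : ∑ x ∈ Finset.range (n + n), x =
      ∑ x ∈ Finset.range n, x + (n * n + ∑ x ∈ Finset.range n, x) := by
    rw [Finset.sum_range_add, Finset.sum_add_distrib, Finset.sum_const, Finset.card_range,
      smul_eq_mul]
  obtain ⟨c, hc⟩ := h3
  refine ⟨n - c, ?_⟩
  zify at h4 h5 hc ⊢
  linear_combination h4 + h5 - hc

lemma card_isSelection (n : ℕ) (hn : 1 ≤ n) :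
    Nat.card {A // IsSelection n A} = 2 * planeTreeT n := by
  obtain ⟨q, rfl⟩ : ∃ q, n = q + 1 := ⟨n - 1, by omega⟩
  have : Finite {A // IsSelection (q + 1) A} :=
    ((Finset.finite_toSet (Finset.range (q + 1 + (q + 1))).powerset).subset fun A hA ↦
      Finset.mem_coe.mpr (Finset.mem_powerset.mpr hA.1)).to_subtype
  let τ : {A // IsSelection (q + 1) A} → {A // IsSelection (q + 1) A} := fun A ↦ ⟨_, A.2.sdiff⟩
  have hτ : Function.Involutive τ := fun A ↦ Subtype.ext (Finset.sdiff_sdiff_eq_self A.2.1)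
  rw [card_eq_two_mul_of_involutive hτ (fun A ↦ 2 * q + 1 ∉ A.1) fun A ↦ by
    simp only [τ, Finset.mem_sdiff, Finset.mem_range]
    have : 2 * q + 1 < q + 1 + (q + 1) := by omega
    tauto]
  congr 1
  let P : ℕ → Prop := fun x ↦ ((q + 1 : ℕ) : ℤ) ∣ (x : ℤ) - (∑ i ∈ Finset.range (q + 1), i : ℕ)
  calc _ = Nat.card {A : Finset ℕ // A ⊆ Finset.range (q + 1 + q) ∧ A.card = q + 1 ∧
        P (∑ x ∈ A, x)} := by
        refine Nat.card_congr ((Equiv.subtypeSubtypeEquivSubtypeInter (IsSelection (q + 1))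
          (fun A ↦ 2 * q + 1 ∉ A)).trans
          (Equiv.subtypeEquivRight fun A ↦ ?_))
        have : A ⊆ Finset.range (q + 1 + q) ↔
            A ⊆ Finset.range (q + 1 + (q + 1)) ∧ 2 * q + 1 ∉ A := by
          rw [← add_assoc (q + 1) q 1, Finset.range_add_one,
            show q + 1 + q = 2 * q + 1 by ring]
          constructor
          · intro h
            exact ⟨h.trans (Finset.subset_insert _ _), fun h' ↦ by simpa using h h'⟩
          · rintro ⟨h, h'⟩
            exact (Finset.subset_insert_iff_of_notMem h').mp h
        rw [this, IsSelection]
        tauto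
    _ = Nat.card {g : Fin (q + 1) → Fin (q + 1) // Monotone g ∧
        (∑ i, (g i : ℕ)) % (q + 1) = 0} := by
        rw [← card_monotone_eq_card_finset]
        refine Nat.card_congr (Equiv.subtypeEquivRight fun g ↦ and_congr_right fun _ ↦ ?_)
        simp only [P]
        rw [Nat.cast_add (∑ i, (g i : ℕ)), add_sub_cancel_right,
          Int.natCast_dvd_natCast, Nat.dvd_iff_mod_eq_zero]
    _ = _ := card_monotone_eq_card_sym _ _ (fun x ↦ x % (q + 1) = 0)

end Selections

/-- The increment, in units of two, of a walk over a pair of consecutive steps. -/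
def stepPairValue (x : Bool × Bool) : ℤ := x.1.toNat + x.2.toNat - 1

section StepPairs

lemma card_list_eq_card_fin {α : Type*} (n : ℕ) (q : List α → Prop) :
    Nat.card {w : List α // w.length = n ∧ q w} =
      Nat.card {f : Fin n → α // q (List.ofFn f)} := by
  let F : {f : Fin n → α // q (List.ofFn f)} → {w : List α // w.length = n ∧ q w} :=
    fun f ↦ ⟨List.ofFn f.1, List.length_ofFn, f.2⟩
  refine (Nat.card_congr (Equiv.ofBijective F ⟨?_, ?_⟩)).symm
  · intro f g h
    exact Subtype.ext (List.ofFn_injective (congrArg Subtype.val h))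
  · rintro ⟨w, rfl, hw⟩
    exact ⟨⟨w.get, by rwa [List.ofFn_get]⟩, Subtype.ext (List.ofFn_get w)⟩

lemma wordHeight_ofFn {α : Type*} (v : α → ℤ) {n : ℕ} (f : Fin n → α) :
    wordHeight v (List.ofFn f) = ∑ i, v (f i) := by
  simp [wordHeight, List.map_ofFn, List.sum_ofFn]

lemma wordArea_ofFn {α : Type*} (v : α → ℤ) {n : ℕ} (f : Fin n → α) :
    wordArea v (List.ofFn f) = ∑ i : Fin n, ((n : ℤ) - i) * v (f i) := by
  induction n with
  | zero => simp
  | succ n ih =>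
    simp only [List.ofFn_succ, wordArea, ih, List.length_ofFn, Fin.sum_univ_succ, Fin.val_zero,
      Fin.val_succ]
    push_cast
    simp only [add_sub_add_right_eq_sub]
    ring

lemma isCyclicWord_ofFn_iff {α : Type*} (v : α → ℤ) {n : ℕ} (f : Fin n → α) :
    IsCyclicWord v (List.ofFn f) ↔ ∑ i, v (f i) = 0 ∧ (n : ℤ) ∣ ∑ i : Fin n, i * v (f i) := by
  rw [IsCyclicWord, wordHeight_ofFn, wordArea_ofFn, List.length_ofFn]
  refine and_congr_right fun h ↦ ?_
  simp only [sub_mul, Finset.sum_sub_distrib, ← Finset.mul_sum, h]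
  simp

lemma isCyclicWord_iff_isSelection {n : ℕ} {A : Finset ℕ} (hA : A ⊆ Finset.range (n + n)) :
    IsCyclicWord stepPairValue
        (List.ofFn fun i : Fin n ↦ (decide ((i : ℕ) ∈ A), decide (n + i ∈ A))) ↔
      IsSelection n A := by
  have hsum (f : ℕ → ℤ) : ∑ x ∈ A, f x =
      ∑ i ∈ Finset.range n, f i * (decide (i ∈ A)).toNat +
        ∑ i ∈ Finset.range n, f (n + i) * (decide (n + i ∈ A)).toNat := by
    rw [← Finset.sum_range_add (fun i ↦ f i * (decide (i ∈ A)).toNat),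
      ← Finset.inter_eq_right.mpr hA, ← Finset.sum_ite_mem]
    refine Finset.sum_congr rfl fun i hi ↦ ?_
    by_cases h : i ∈ A <;> simp [h, Finset.mem_range.mp hi]
  have hcard := hsum fun _ ↦ 1
  have hval := hsum fun i ↦ i
  simp only [Finset.sum_const, nsmul_eq_mul, mul_one, one_mul] at hcard
  push_cast at hval
  simp only [add_mul, Finset.sum_add_distrib, ← Finset.mul_sum] at hval
  rw [isCyclicWord_ofFn_iff, IsSelection]
  simp only [stepPairValue]
  rw [Fin.sum_univ_eq_sum_range
      (fun i ↦ ((decide (i ∈ A)).toNat : ℤ) + (decide (n + i ∈ A)).toNat - 1),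
    Fin.sum_univ_eq_sum_range
      (fun i ↦ (i : ℤ) * (((decide (i ∈ A)).toNat : ℤ) + (decide (n + i ∈ A)).toNat - 1))]
  simp only [mul_sub, mul_add, Finset.sum_sub_distrib, Finset.sum_add_distrib, mul_one,
    Finset.sum_const, Finset.card_range, nsmul_eq_mul]
  push_cast
  rw [hval, ← hcard, sub_eq_zero, Nat.cast_inj]
  simp only [hA, true_and]
  refine and_congr_right fun _ ↦ ?_
  rw [← dvd_add_left (dvd_mul_right (n : ℤ)
    (∑ i ∈ Finset.range n, ((decide (n + i ∈ A)).toNat : ℤ)))]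
  ring_nf

lemma cyclicWordCount_stepPairValue (n : ℕ) (hn : 1 ≤ n) :
    cyclicWordCount stepPairValue n = 2 * planeTreeT n := by
  rw [← card_isSelection n hn, cyclicWordCount, card_list_eq_card_fin]
  let F : {A // IsSelection n A} →
      {f : Fin n → Bool × Bool // IsCyclicWord stepPairValue (List.ofFn f)} := fun A ↦
    ⟨_, (isCyclicWord_iff_isSelection A.2.1).mpr A.2⟩
  refine (Nat.card_congr (Equiv.ofBijective F ⟨?_, ?_⟩)).symm
  · rintro ⟨A, hA⟩ ⟨B, hB⟩ h
    have h' (i : Fin n) : ((i : ℕ) ∈ A ↔ (i : ℕ) ∈ B) ∧ (n + i ∈ A ↔ n + i ∈ B) := by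
      simpa [F] using congrFun (congrArg Subtype.val h) i
    refine Subtype.ext (Finset.ext fun j ↦ ?_)
    by_cases hj : j < n + n
    · rcases lt_or_ge j n with hjn | hjn
      · exact (h' ⟨j, hjn⟩).1
      · obtain ⟨i, rfl⟩ := Nat.exists_eq_add_of_le hjn
        exact (h' ⟨i, by omega⟩).2
    · exact iff_of_false (fun h ↦ hj (Finset.mem_range.mp (hA.1 h)))
        (fun h ↦ hj (Finset.mem_range.mp (hB.1 h)))
  · rintro ⟨f, hf⟩
    let A := (Finset.univ.filter fun i : Fin n ↦ (f i).1).image (fun i : Fin n ↦ (i : ℕ)) ∪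
      (Finset.univ.filter fun i : Fin n ↦ (f i).2).image (fun i : Fin n ↦ n + (i : ℕ))
    have hA : A ⊆ Finset.range (n + n) := by
      intro j hj
      simp only [A, Finset.mem_union, Finset.mem_image, Finset.mem_range] at hj ⊢
      omega
    have hfA : (fun i : Fin n ↦ (decide ((i : ℕ) ∈ A), decide (n + i ∈ A))) = f := by
      funext i
      have h1 : (i : ℕ) ∈ A ↔ (f i).1 = true := by
        simp only [A, Finset.mem_union, Finset.mem_image, Finset.mem_filter, Finset.mem_univ,
          true_and]
        constructor
        · rintro (⟨j, hj, hji⟩ | ⟨j, hj, hji⟩)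
          · rwa [← Fin.ext hji]
          · omega
        · exact fun h ↦ .inl ⟨i, h, rfl⟩
      have h2 : n + (i : ℕ) ∈ A ↔ (f i).2 = true := by
        simp only [A, Finset.mem_union, Finset.mem_image, Finset.mem_filter, Finset.mem_univ,
          true_and]
        constructor
        · rintro (⟨j, hj, hji⟩ | ⟨j, hj, hji⟩)
          · omega
          · rwa [← Fin.ext (Nat.add_left_cancel hji)]
        · exact fun h ↦ .inr ⟨i, h, rfl⟩
      simp [h1, h2]
    exact ⟨⟨A, (isCyclicWord_iff_isSelection hA).mp (by rwa [hfA])⟩, Subtype.ext hfA⟩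

/-- Grouping the steps of a walk in consecutive pairs. -/
def stepPairEquiv (n : ℕ) : (Fin (2 * n) → Bool) ≃ (Fin n → Bool × Bool) where
  toFun ε i := (ε ⟨2 * i, by omega⟩, ε ⟨2 * i + 1, by omega⟩)
  invFun f j := if (j : ℕ) % 2 = 0 then (f ⟨j / 2, by omega⟩).1 else (f ⟨j / 2, by omega⟩).2
  left_inv ε := by
    funext j
    rcases Nat.mod_two_eq_zero_or_one j with h | h
    · simp only [h, if_true]
      exact congrArg ε (Fin.ext (by simp only; omega))
    · simp only [h, one_ne_zero, if_false]
      exact congrArg ε (Fin.ext (by simp only; omega))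
  right_inv f := by
    funext i
    have h1 : (2 * (i : ℕ) + 1) % 2 = 1 := by omega
    have h2 : (2 * (i : ℕ) + 1) / 2 = i := by omega
    simp [h1, h2]

variable {n : ℕ} (ε : Fin (2 * n) → Bool)

lemma wpos_two_mul (k : ℕ) (hk : k ≤ n) :
    wpos n ε (2 * k) =
      2 * wordHeight stepPairValue ((List.ofFn (stepPairEquiv n ε)).take k) := by
  induction k with
  | zero => simp [wpos]
  | succ k ih =>
    have h0 : 2 * k < 2 * n := by omega
    have h1 : 2 * k + 1 < 2 * n := by omega
    have ih := ih (by omega)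
    rw [wpos] at ih ⊢
    rw [show 2 * (k + 1) = 2 * k + 1 + 1 by ring, Finset.sum_range_succ, Finset.sum_range_succ,
      ih, List.take_succ_eq_append_getElem (by simpa using hk), wordHeight_append,
      wordHeight_singleton]
    simp only [stepVal, h0, h1, dif_pos, List.getElem_ofFn, stepPairEquiv, Equiv.coe_fn_mk,
      stepPairValue]
    cases ε ⟨2 * k, h0⟩ <;> cases ε ⟨2 * k + 1, h1⟩ <;> simp <;> ring

lemma psig_eq_wordArea (k : ℕ) (hk : k ≤ n) :
    psig n ε k = wordArea stepPairValue ((List.ofFn (stepPairEquiv n ε)).take k) := by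
  suffices ∑ i ∈ Finset.range k, wpos n ε (2 * (i + 1)) =
      2 * wordArea stepPairValue ((List.ofFn (stepPairEquiv n ε)).take k) by
    rw [psig, this, Int.mul_ediv_cancel_left _ two_ne_zero]
  induction k with
  | zero => simp
  | succ k ih =>
    rw [Finset.sum_range_succ, ih (by omega), wpos_two_mul ε (k + 1) hk,
      List.take_succ_eq_append_getElem (by simpa using hk), wordArea_append, wordArea_singleton,
      wordHeight_append, wordHeight_singleton]
    simp only [List.length_singleton]
    push_cast
    ring

lemma isGraphical_iff_isGraphicalWord :
    IsGraphical n ε ↔ IsGraphicalWord stepPairValue (List.ofFn (stepPairEquiv n ε)) := by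
  have htake : (List.ofFn (stepPairEquiv n ε)).take n = List.ofFn (stepPairEquiv n ε) :=
    List.take_of_length_le (by simp)
  rw [IsGraphical, IsBridge, dsigma, wpos_two_mul ε n le_rfl, psig_eq_wordArea ε n le_rfl, htake,
    IsGraphicalWord]
  refine and_congr (by simp) (and_congr_right fun harea ↦ ⟨fun h u hu ↦ ?_, fun h k _ hk ↦ ?_⟩)
  · have hlen : u.length ≤ n := by simpa using hu.length_le
    have hu' := List.prefix_iff_eq_take.mp hu
    rcases Nat.eq_zero_or_pos u.length with h0 | h0
    · simp [List.length_eq_zero_iff.mp h0]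
    rcases hlen.lt_or_eq with hlt | heq
    · rw [hu', ← psig_eq_wordArea ε u.length hlen]
      exact h _ h0 hlt
    · rw [hu', heq, htake, harea]
  · rw [psig_eq_wordArea ε k hk.le]
    exact h _ ⟨_, List.take_append_drop k _⟩

lemma graphicalCount_eq_graphicalWordCount (n : ℕ) :
    graphicalCount n = graphicalWordCount stepPairValue n := by
  rw [graphicalCount, graphicalWordCount, card_list_eq_card_fin]
  exact Nat.card_congr ((stepPairEquiv n).subtypeEquiv isGraphical_iff_isGraphicalWord)

end StepPairs

theorem log_transform_of_graphical_bridges (n : ℕ) (hn : 1 ≤ n) :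
    n * graphicalCount n =
      ∑ i ∈ Finset.Icc 1 n, 2 * planeTreeT i * graphicalCount (n - i) := by
  have hv : ∀ x, stepPairValue x ≤ 1 := by decide
  simp only [graphicalCount_eq_graphicalWordCount]
  rw [mul_graphicalWordCount hv]
  refine Finset.sum_congr rfl fun i hi ↦ ?_
  rw [cyclicWordCount_stepPairValue i (Finset.mem_Icc.mp hi).1]
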